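/- Let F : 2^U → 2^V be the map induced by a weighted matching instance (G = (U,V;E), w) in which all matchings have pairwise distinct weights, and let 𝓕 := { F(U') : U' ⊆ U }. Then the set system (V, 𝓕) is an antimatroid: ∅ ∈ 𝓕; for every nonempty X ∈ 𝓕 there exists v ∈ X with X∖{v} ∈ 𝓕; and for all X, Y ∈ 𝓕 one has X ∪ Y ∈ 𝓕. -/

import Mathlib

/-!
Price a right vertex `v` at its marginal contribution, the maximum weight of a matching minus the
maximum weight of a matching that avoids `v`. At these prices every left vertex prefers its
partner in the maximum-weight matching `M` to any other neighbour `v`: if `M` gives up the edge to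
the partner and a best matching avoiding `v` receives the edge to `v`, then the two can be swapped
along an alternating path into two matchings, one of which avoids the partner. So `M` is a market
equilibrium. Conversely, by weak duality, an equilibrium matching is a maximum-weight matching on
the left vertices it uses, so the family consists of the sets of right vertices sold in equilibria.

Such sets are accessible because lowering all prices until the cheapest sold vertex is free leaves
an equilibrium without that vertex. They are closed under union because giving each right vertex
to the higher bidder of two equilibria is an equilibrium for the maximum of the two price vectors;
uniqueness makes the prices of matched vertices positive, so that every vertex sold in either
equilibrium is sold again.
-/

open scoped Classical

/-- `M` is a matching with edges inside the edge set `E`: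
no two distinct edges of `M` share a left or a right endpoint. -/
def IsMatching {U V : Type*} (E M : Finset (U × V)) : Prop :=
  M ⊆ E ∧ ∀ e₁ ∈ M, ∀ e₂ ∈ M, (e₁.1 = e₂.1 ∨ e₁.2 = e₂.2) → e₁ = e₂

/-- The edge set of the subgraph `G[U' ∪ V]` induced by deleting
the left vertices outside `U'` (and their incident edges). -/
noncomputable def restrictL {U V : Type*} (E : Finset (U × V)) (U' : Finset U) : Finset (U × V) :=
  E.filter (fun e => e.1 ∈ U')

/-- The weight of a matching: the sum of the weights of its edges. -/
noncomputable def mWeight {U V : Type*} (w : U × V → ℝ) (M : Finset (U × V)) : ℝ :=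
  ∑ e ∈ M, w e

/-- `M` is a maximum-weight matching of the graph with edge set `E`. -/
def IsMaxMatching {U V : Type*} (E : Finset (U × V)) (w : U × V → ℝ)
    (M : Finset (U × V)) : Prop :=
  IsMatching E M ∧ ∀ M' : Finset (U × V), IsMatching E M' → mWeight w M' ≤ mWeight w M

/-- All matchings of the graph with edge set `E` have pairwise distinct weights. -/
def DistinctWeights {U V : Type*} (E : Finset (U × V)) (w : U × V → ℝ) : Prop :=
  ∀ M₁ M₂ : Finset (U × V), IsMatching E M₁ → IsMatching E M₂ → M₁ ≠ M₂ →
    mWeight w M₁ ≠ mWeight w M₂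

/-- The codomain `{ F(U') : U' ⊆ U }` of the map `F` induced by the weighted
matching instance: the family of all sets of right vertices matched by the
(unique) maximum-weight matching `MM(G, w; U')` of a subgraph `G[U' ∪ V]`. -/
def mmFamily {U V : Type*} (E : Finset (U × V)) (w : U × V → ℝ) : Set (Finset V) :=
  {X | ∃ (U' : Finset U) (M : Finset (U × V)),
    IsMaxMatching (restrictL E U') w M ∧ X = M.image Prod.snd}

section Matching

variable {U V : Type*} {E M N : Finset (U × V)} {w : U × V → ℝ}

protected theorem IsMatching.empty (E : Finset (U × V)) : IsMatching E ∅ :=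
  ⟨Finset.empty_subset E, by simp⟩

protected theorem IsMatching.subset (hM : IsMatching E M) (hNM : N ⊆ M) : IsMatching E N :=
  ⟨hNM.trans hM.1, fun e he f hf ↦ hM.2 e (hNM he) f (hNM hf)⟩

theorem IsMatching.of_restrictL {A : Finset U} (hM : IsMatching (restrictL E A) M) :
    IsMatching E M :=
  ⟨hM.1.trans (Finset.filter_subset _ _), hM.2⟩

theorem IsMatching.injOn_fst (hM : IsMatching E M) : Set.InjOn Prod.fst (M : Set (U × V)) :=
  fun e he f hf h ↦ hM.2 e he f hf (.inl h)

theorem IsMatching.injOn_snd (hM : IsMatching E M) : Set.InjOn Prod.snd (M : Set (U × V)) :=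
  fun e he f hf h ↦ hM.2 e he f hf (.inr h)

protected theorem IsMatching.union (hM : IsMatching E M) (hN : IsMatching E N)
    (hdisj : ∀ e ∈ M, ∀ f ∈ N, e.1 ≠ f.1 ∧ e.2 ≠ f.2) : IsMatching E (M ∪ N) := by
  refine ⟨Finset.union_subset hM.1 hN.1, fun e he f hf hef ↦ ?_⟩
  rcases Finset.mem_union.1 he with he | he <;> rcases Finset.mem_union.1 hf with hf | hf
  · exact hM.2 e he f hf hef
  · have := hdisj e he f hf
    tauto
  · have := hdisj f hf e he
    tauto
  · exact hN.2 e he f hf hef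

protected theorem IsMatching.insert {e : U × V} (hM : IsMatching E M) (he : e ∈ E)
    (hfree : ∀ f ∈ M, f.1 ≠ e.1 ∧ f.2 ≠ e.2) : IsMatching E (insert e M) := by
  rw [Finset.insert_eq, Finset.union_comm]
  refine hM.union ⟨Finset.singleton_subset_iff.2 he, by simp⟩ fun f hf g hg ↦ ?_
  rw [Finset.mem_singleton.1 hg]
  exact hfree f hf

theorem IsMatching.image_snd_erase {e : U × V} (hM : IsMatching E M) (he : e ∈ M) :
    (M.erase e).image Prod.snd = (M.image Prod.snd).erase e.2 := by
  rw [Finset.erase_eq, Finset.erase_eq, Finset.image_sdiff_of_injOn hM.injOn_snd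
    (Finset.singleton_subset_iff.2 he), Finset.image_singleton]

end Matching

section Exchange

variable {U V : Type*} {E M N : Finset (U × V)} {u x x' : U} {v v' y : V}

/-- The edge set of the graph obtained by deleting the right vertex `v`. -/
noncomputable def deleteR (E : Finset (U × V)) (v : V) : Finset (U × V) :=
  E.filter (fun e ↦ e.2 ≠ v)

theorem isMatching_deleteR_iff :
    IsMatching (deleteR E v) M ↔ IsMatching E M ∧ ∀ e ∈ M, e.2 ≠ v := by
  simp only [IsMatching, deleteR, Finset.subset_iff, Finset.mem_filter, imp_and, forall_and]
  tauto

/-- The edge set that agrees with `M` at the left vertices satisfying `R` and with `N` at the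
others; it is used to swap two matchings along alternating paths. -/
noncomputable def splice (R : U → Prop) (M N : Finset (U × V)) : Finset (U × V) :=
  M.filter (fun e ↦ R e.1) ∪ N.filter (fun e ↦ ¬ R e.1)

theorem mem_splice {R : U → Prop} {e : U × V} :
    e ∈ splice R M N ↔ e ∈ M ∧ R e.1 ∨ e ∈ N ∧ ¬ R e.1 := by
  simp only [splice, Finset.mem_union, Finset.mem_filter]

protected theorem IsMatching.splice {R : U → Prop} (hM : IsMatching E M) (hN : IsMatching E N)
    (hR : ∀ x x' y, (x, y) ∈ M → (x', y) ∈ N → R x → R x') : IsMatching E (splice R M N) := by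
  refine (hM.subset (Finset.filter_subset _ _)).union (hN.subset (Finset.filter_subset _ _)) ?_
  rintro ⟨x, y⟩ he ⟨x', y'⟩ hf
  obtain ⟨he, hx⟩ := Finset.mem_filter.1 he
  obtain ⟨hf, hx'⟩ := Finset.mem_filter.1 hf
  refine ⟨?_, ?_⟩
  · rintro rfl
    exact hx' hx
  · rintro rfl
    exact hx' (hR x x' y he hf hx)

theorem mWeight_splice_add_mWeight_splice (w : U × V → ℝ) (R : U → Prop)
    (M N : Finset (U × V)) :
    mWeight w (splice R M N) + mWeight w (splice R N M) = mWeight w M + mWeight w N := by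
  have mWeight_splice (M N : Finset (U × V)) : mWeight w (splice R M N) =
      ∑ e ∈ M with R e.1, w e + ∑ e ∈ N with ¬ R e.1, w e :=
    Finset.sum_union (Finset.disjoint_filter_filter_not M N _)
  rw [mWeight_splice, mWeight_splice, mWeight, mWeight,
    ← Finset.sum_filter_add_sum_filter_not M (fun e ↦ R e.1),
    ← Finset.sum_filter_add_sum_filter_not N (fun e ↦ R e.1)]
  ring

/-- The left vertex `x` can be reached from `u` by a path that alternately traverses an edge of
`N` from left to right and an edge of `M` from right to left. -/
def AlternatesTo (N M : Finset (U × V)) (u x : U) : Prop :=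
  Relation.ReflTransGen (fun x x' ↦ ∃ y, (x, y) ∈ N ∧ (x', y) ∈ M) u x

theorem AlternatesTo.step (h : AlternatesTo N M u x) (hN : (x, y) ∈ N) (hM : (x', y) ∈ M) :
    AlternatesTo N M u x' :=
  Relation.ReflTransGen.tail h ⟨y, hN, hM⟩

theorem AlternatesTo.exists_prev (h : AlternatesTo N M u x) (hxu : x ≠ u) (hM : IsMatching E M)
    (hxy : (x, y) ∈ M) : ∃ x', AlternatesTo N M u x' ∧ (x', y) ∈ N := by
  obtain hx | ⟨x', hx', y', hN, hM'⟩ := Relation.ReflTransGen.cases_tail h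
  · exact absurd hx hxu
  · obtain rfl : y = y' := congrArg Prod.snd (hM.injOn_fst hxy hM' rfl)
    exact ⟨x', hx', hN⟩

theorem isMatching_splice_alternatesTo (hN : IsMatching E N) (hM : IsMatching E M) :
    IsMatching E (splice (AlternatesTo N M u) N M) :=
  hN.splice hM fun _ _ _ hxy hx'y hx ↦ hx.step hxy hx'y

theorem isMatching_insert_splice_alternatesTo (hN : IsMatching E N) (hM : IsMatching E M)
    (huv : (u, v) ∈ E) (hu : ∀ e ∈ M, e.1 ≠ u) (hv : ∀ e ∈ N, e.2 ≠ v) :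
    (u, v) ∉ splice (AlternatesTo N M u) M N ∧
      IsMatching E (insert (u, v) (splice (AlternatesTo N M u) M N)) := by
  have hfree : ∀ f ∈ splice (AlternatesTo N M u) M N, f.1 ≠ u ∧ f.2 ≠ v := by
    rintro ⟨x, y⟩ hf
    rcases mem_splice.1 hf with ⟨hf, hx⟩ | ⟨hf, hx⟩
    · refine ⟨hu _ hf, fun hy ↦ ?_⟩
      obtain ⟨x', -, hx'⟩ := hx.exists_prev (hu _ hf) hM hf
      exact hv _ hx' hy
    · refine ⟨fun hxu ↦ hx ?_, hv _ hf⟩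
      rw [hxu]
      exact Relation.ReflTransGen.refl
  refine ⟨fun h ↦ (hfree _ h).1 rfl, (hM.splice hN fun x x' y hxy hx'y hx ↦ ?_).insert huv hfree⟩
  obtain ⟨z, hz, hzy⟩ := hx.exists_prev (hu _ hxy) hM hxy
  obtain rfl : x' = z := congrArg Prod.fst (hN.injOn_snd hx'y hzy rfl)
  exact hz

/- The bipartite multigraph formed by `M`, `N` and the edge `(u, v)` has maximum degree two, hence
splits into two matchings; as `v'` has degree at most one, one of them avoids it. -/
theorem IsMatching.exists_exchange (w : U × V → ℝ) (hM : IsMatching E M) (hN : IsMatching E N)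
    (huv : (u, v) ∈ E) (hu : ∀ e ∈ M, e.1 ≠ u) (hv : ∀ e ∈ N, e.2 ≠ v)
    (hv' : ∀ e ∈ M, e.2 ≠ v') (hne : v ≠ v') :
    ∃ P Q, IsMatching E P ∧ IsMatching (deleteR E v') Q ∧
      mWeight w P + mWeight w Q = mWeight w M + mWeight w N + w (u, v) := by
  set R := AlternatesTo N M u
  have hP : IsMatching E (splice R N M) := isMatching_splice_alternatesTo hN hM
  obtain ⟨hnotMem, hQ⟩ := isMatching_insert_splice_alternatesTo hN hM huv hu hv
  have hweight : mWeight w (splice R N M) + mWeight w (insert (u, v) (splice R M N)) =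
      mWeight w M + mWeight w N + w (u, v) := by
    rw [← mWeight_splice_add_mWeight_splice w R M N, mWeight, mWeight, mWeight,
      Finset.sum_insert hnotMem]
    ring
  by_cases hreach : ∃ x, R x ∧ (x, v') ∈ N
  · obtain ⟨x, hx, hxv'⟩ := hreach
    refine ⟨_, _, hP, isMatching_deleteR_iff.2 ⟨hQ, fun e he hev' ↦ ?_⟩, hweight⟩
    rcases Finset.mem_insert.1 he with rfl | he
    · exact hne hev'
    · rcases mem_splice.1 he with ⟨he, -⟩ | ⟨he, hR⟩
      · exact hv' e he hev'
      · rw [hN.injOn_snd he hxv' hev'] at hR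
        exact hR hx
  · refine ⟨_, _, hQ, isMatching_deleteR_iff.2 ⟨hP, fun e he hev' ↦ ?_⟩,
      (add_comm _ _).trans hweight⟩
    rcases mem_splice.1 he with ⟨he, hR⟩ | ⟨he, -⟩
    · exact hreach ⟨e.1, hR, hev' ▸ he⟩
    · exact hv' e he hev'

end Exchange

section MarginalPrice

variable {U V : Type*} {E M : Finset (U × V)} {w : U × V → ℝ}

/-- The maximum weight of a matching of the graph with edge set `E`. -/
noncomputable def maxWeight (E : Finset (U × V)) (w : U × V → ℝ) : ℝ :=
  (E.powerset.filter (IsMatching E)).sup' ⟨∅, by simp [IsMatching.empty]⟩ (mWeight w)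

theorem IsMatching.mWeight_le_maxWeight (hM : IsMatching E M) (w : U × V → ℝ) :
    mWeight w M ≤ maxWeight E w :=
  Finset.le_sup' _ (Finset.mem_filter.2 ⟨Finset.mem_powerset.2 hM.1, hM⟩)

theorem exists_isMatching_mWeight_eq_maxWeight (E : Finset (U × V)) (w : U × V → ℝ) :
    ∃ M, IsMatching E M ∧ mWeight w M = maxWeight E w := by
  obtain ⟨M, hM, hweight⟩ := Finset.exists_mem_eq_sup' _ (mWeight w)
  exact ⟨M, (Finset.mem_filter.1 hM).2, hweight.symm⟩

theorem IsMaxMatching.mWeight_eq_maxWeight (hM : IsMaxMatching E w M) :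
    mWeight w M = maxWeight E w := by
  obtain ⟨N, hN, hweight⟩ := exists_isMatching_mWeight_eq_maxWeight E w
  exact (hM.1.mWeight_le_maxWeight w).antisymm (hweight ▸ hM.2 N hN)

/-- The marginal contribution of the right vertex `v` to the maximum weight of a matching. -/
noncomputable def marginalPrice (E : Finset (U × V)) (w : U × V → ℝ) (v : V) : ℝ :=
  maxWeight E w - maxWeight (deleteR E v) w

theorem marginalPrice_nonneg (E : Finset (U × V)) (w : U × V → ℝ) (v : V) :
    0 ≤ marginalPrice E w v := by
  obtain ⟨N, hN, hweight⟩ := exists_isMatching_mWeight_eq_maxWeight (deleteR E v) w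
  rw [marginalPrice, ← hweight, sub_nonneg]
  exact (isMatching_deleteR_iff.1 hN).1.mWeight_le_maxWeight w

theorem IsMaxMatching.marginalPrice_eq_zero {v : V} (hM : IsMaxMatching E w M)
    (hv : v ∉ M.image Prod.snd) : marginalPrice E w v = 0 := by
  refine (marginalPrice_nonneg E w v).antisymm' ?_
  have hMv : IsMatching (deleteR E v) M :=
    isMatching_deleteR_iff.2 ⟨hM.1, fun e he hev ↦ hv (hev ▸ Finset.mem_image_of_mem _ he)⟩
  rw [marginalPrice, ← hM.mWeight_eq_maxWeight, sub_nonpos]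
  exact hMv.mWeight_le_maxWeight w

theorem IsMatching.erase_deleteR {e : U × V} (hM : IsMatching E M) (he : e ∈ M) :
    IsMatching (deleteR E e.2) (M.erase e) :=
  isMatching_deleteR_iff.2 ⟨hM.subset (Finset.erase_subset e M), fun _ hf hfe ↦
    Finset.ne_of_mem_erase hf (hM.injOn_snd (Finset.mem_of_mem_erase hf) he hfe)⟩

theorem IsMaxMatching.marginalPrice_le {e : U × V} (hM : IsMaxMatching E w M) (he : e ∈ M) :
    marginalPrice E w e.2 ≤ w e := by
  have hle := (hM.1.erase_deleteR he).mWeight_le_maxWeight w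
  have hsplit : mWeight w (M.erase e) + w e = mWeight w M := Finset.sum_erase_add M w he
  rw [marginalPrice, ← hM.mWeight_eq_maxWeight]
  linarith

theorem IsMaxMatching.sub_marginalPrice_le {e : U × V} {v : V} (hM : IsMaxMatching E w M)
    (he : e ∈ M) (hv : (e.1, v) ∈ E) :
    w (e.1, v) - marginalPrice E w v ≤ w e - marginalPrice E w e.2 := by
  obtain rfl | hne := eq_or_ne v e.2
  · exact le_rfl
  obtain ⟨N, hN, hNweight⟩ := exists_isMatching_mWeight_eq_maxWeight (deleteR E v) w
  obtain ⟨hN, hNv⟩ := isMatching_deleteR_iff.1 hN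
  obtain ⟨hMe, hMe₂⟩ := isMatching_deleteR_iff.1 (hM.1.erase_deleteR he)
  have hMe₁ : ∀ f ∈ M.erase e, f.1 ≠ e.1 := fun f hf hfe ↦
    Finset.ne_of_mem_erase hf (hM.1.injOn_fst (Finset.mem_of_mem_erase hf) he hfe)
  obtain ⟨P, Q, hP, hQ, hPQ⟩ := hMe.exists_exchange w hN hv hMe₁ hNv hMe₂ hne
  have hsplit : mWeight w (M.erase e) + w e = mWeight w M := Finset.sum_erase_add M w he
  have hPle := hM.2 P hP
  have hQle := hQ.mWeight_le_maxWeight w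
  simp only [marginalPrice]
  linarith

theorem marginalPrice_pos {v : V}
    (hv : ∀ N, IsMaxMatching E w N → v ∈ N.image Prod.snd) : 0 < marginalPrice E w v := by
  refine (marginalPrice_nonneg E w v).lt_of_ne' fun hzero ↦ ?_
  obtain ⟨N, hN, hweight⟩ := exists_isMatching_mWeight_eq_maxWeight (deleteR E v) w
  obtain ⟨hN, hNv⟩ := isMatching_deleteR_iff.1 hN
  have hNmax : IsMaxMatching E w N := ⟨hN, fun N' hN' ↦ by
    rw [hweight, ← sub_eq_zero.1 hzero]
    exact hN'.mWeight_le_maxWeight w⟩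
  obtain ⟨e, he, hev⟩ := Finset.mem_image.1 (hv N hNmax)
  exact hNv e he hev

end MarginalPrice

/-- The prices `p` of the right vertices support the matching `M` as a market equilibrium in which
only the left vertices of `M` take part: unsold vertices are free, every buyer can afford its
partner, and no buyer prefers another vertex at the given prices. -/
structure IsEquilibrium {U V : Type*} (E : Finset (U × V)) (w : U × V → ℝ) (M : Finset (U × V))
    (p : V → ℝ) : Prop where
  isMatching : IsMatching E M
  nonneg : ∀ v, 0 ≤ p v
  eq_zero : ∀ v ∉ M.image Prod.snd, p v = 0
  le_weight : ∀ e ∈ M, p e.2 ≤ w e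
  sub_le_sub : ∀ e ∈ M, ∀ v, (e.1, v) ∈ E → w (e.1, v) - p v ≤ w e - p e.2

section Equilibrium

variable {U V : Type*} {E M N : Finset (U × V)} {w : U × V → ℝ} {p q : V → ℝ}

theorem IsMaxMatching.isEquilibrium_marginalPrice {A : Finset U}
    (hM : IsMaxMatching (restrictL E A) w M) :
    IsEquilibrium E w M (marginalPrice (restrictL E A) w) where
  isMatching := hM.1.of_restrictL
  nonneg := marginalPrice_nonneg _ w
  eq_zero _ hv := hM.marginalPrice_eq_zero hv
  le_weight _ he := hM.marginalPrice_le he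
  sub_le_sub _ he _ hv := hM.sub_marginalPrice_le he
    (Finset.mem_filter.2 ⟨hv, (Finset.mem_filter.1 (hM.1.1 he)).2⟩)

namespace IsEquilibrium

theorem mem_image_snd_of_pos (h : IsEquilibrium E w M p) {v : V} (hv : 0 < p v) :
    v ∈ M.image Prod.snd :=
  by_contra fun hmem ↦ hv.ne' (h.eq_zero v hmem)

theorem sum_price_le (h : IsEquilibrium E w M p) (hN : IsMatching E N) :
    ∑ e ∈ N, p e.2 ≤ ∑ e ∈ M, p e.2 := by
  rw [← Finset.sum_image hN.injOn_snd, ← Finset.sum_image h.isMatching.injOn_snd]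
  calc ∑ v ∈ N.image Prod.snd, p v
      ≤ ∑ v ∈ N.image Prod.snd ∪ M.image Prod.snd, p v :=
        Finset.sum_le_sum_of_subset_of_nonneg Finset.subset_union_left fun v _ _ ↦ h.nonneg v
    _ = ∑ v ∈ M.image Prod.snd, p v :=
        (Finset.sum_subset Finset.subset_union_right fun v _ hv ↦ h.eq_zero v hv).symm

theorem sum_surplus_le (h : IsEquilibrium E w M p) (hN : IsMatching E N)
    (hNM : ∀ e ∈ N, e.1 ∈ M.image Prod.fst) :
    ∑ e ∈ N, (w e - p e.2) ≤ ∑ e ∈ M, (w e - p e.2) := by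
  have hpartner : ∀ e ∈ N, ∃ f ∈ M, f.1 = e.1 := fun e he ↦ Finset.mem_image.1 (hNM e he)
  choose! f hfM hf₁ using hpartner
  have hinj : Set.InjOn f N := fun a ha b hb hab ↦
    hN.injOn_fst ha hb (by rw [← hf₁ a ha, ← hf₁ b hb, hab])
  calc ∑ e ∈ N, (w e - p e.2)
      ≤ ∑ e ∈ N, (w (f e) - p (f e).2) := Finset.sum_le_sum fun e he ↦ by
        have hsub := h.sub_le_sub (f e) (hfM e he) e.2
        rw [hf₁ e he] at hsub
        exact hsub (hN.1 he)
    _ = ∑ e ∈ N.image f, (w e - p e.2) :=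
        (Finset.sum_image (f := fun e ↦ w e - p e.2) hinj).symm
    _ ≤ ∑ e ∈ M, (w e - p e.2) := Finset.sum_le_sum_of_subset_of_nonneg
        (Finset.image_subset_iff.2 hfM) fun e he _ ↦ sub_nonneg.2 (h.le_weight e he)

theorem isMaxMatching (h : IsEquilibrium E w M p) :
    IsMaxMatching (restrictL E (M.image Prod.fst)) w M := by
  refine ⟨⟨fun e he ↦ Finset.mem_filter.2 ⟨h.isMatching.1 he, Finset.mem_image_of_mem _ he⟩,
    h.isMatching.2⟩, fun N hN ↦ ?_⟩
  have hprice := h.sum_price_le hN.of_restrictL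
  have hsurplus := h.sum_surplus_le hN.of_restrictL fun e he ↦ (Finset.mem_filter.1 (hN.1 he)).2
  rw [Finset.sum_sub_distrib, Finset.sum_sub_distrib] at hsurplus
  simp only [mWeight]
  linarith

theorem image_snd_mem_mmFamily (h : IsEquilibrium E w M p) :
    M.image Prod.snd ∈ mmFamily E w :=
  ⟨_, M, h.isMaxMatching, rfl⟩

protected theorem empty (E : Finset (U × V)) (w : U × V → ℝ) : IsEquilibrium E w ∅ 0 where
  isMatching := IsMatching.empty E
  nonneg _ := le_rfl
  eq_zero _ _ := rfl
  le_weight := by simp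
  sub_le_sub := by simp

theorem erase_cheapest (h : IsEquilibrium E w M p) {e : U × V} (he : e ∈ M)
    (hmin : ∀ f ∈ M, p e.2 ≤ p f.2) :
    IsEquilibrium E w (M.erase e) fun v ↦ max (p v - p e.2) 0 := by
  have hprice : ∀ f ∈ M.erase e, max (p f.2 - p e.2) 0 = p f.2 - p e.2 := fun f hf ↦
    max_eq_left (sub_nonneg.2 (hmin f (Finset.mem_of_mem_erase hf)))
  refine ⟨h.isMatching.subset (Finset.erase_subset e M), fun v ↦ le_max_right _ _,
    fun v hv ↦ max_eq_right ?_, fun f hf ↦ ?_, fun f hf v hv ↦ ?_⟩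
  · rw [h.isMatching.image_snd_erase he, Finset.mem_erase, not_and_or, not_not] at hv
    rcases hv with rfl | hv
    · rw [sub_self]
    · linarith [h.eq_zero v hv, h.nonneg e.2]
  · rw [hprice f hf]
    linarith [h.le_weight f (Finset.mem_of_mem_erase hf), h.nonneg e.2]
  · rw [hprice f hf]
    linarith [h.sub_le_sub f (Finset.mem_of_mem_erase hf) v hv, le_max_left (p v - p e.2) 0]

theorem exists_erase_mem_mmFamily (h : IsEquilibrium E w M p) (hne : M.Nonempty) :
    ∃ v ∈ M.image Prod.snd, (M.image Prod.snd).erase v ∈ mmFamily E w := by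
  obtain ⟨e, he, hmin⟩ := M.exists_min_image (fun e ↦ p e.2) hne
  refine ⟨e.2, Finset.mem_image_of_mem _ he, ?_⟩
  rw [← h.isMatching.image_snd_erase he]
  exact (h.erase_cheapest he hmin).image_snd_mem_mmFamily

end IsEquilibrium

/-- The allocation that sells each right vertex to its buyer in `M` if its price `p` there is
higher than its price `q` in `N`, and to its buyer in `N` otherwise. -/
noncomputable def higherBids (M N : Finset (U × V)) (p q : V → ℝ) : Finset (U × V) :=
  M.filter (fun e ↦ q e.2 < p e.2) ∪ N.filter (fun e ↦ p e.2 ≤ q e.2)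

theorem mem_higherBids {e : U × V} :
    e ∈ higherBids M N p q ↔ e ∈ M ∧ q e.2 < p e.2 ∨ e ∈ N ∧ p e.2 ≤ q e.2 := by
  simp only [higherBids, Finset.mem_union, Finset.mem_filter]

namespace IsEquilibrium

theorem isMatching_higherBids (hM : IsEquilibrium E w M p) (hN : IsEquilibrium E w N q) :
    IsMatching E (higherBids M N p q) := by
  refine (hM.isMatching.subset (Finset.filter_subset _ _)).union
    (hN.isMatching.subset (Finset.filter_subset _ _)) ?_
  rintro ⟨x, y⟩ he ⟨x', y'⟩ hf
  obtain ⟨he, hlt⟩ := Finset.mem_filter.1 he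
  obtain ⟨hf, hle⟩ := Finset.mem_filter.1 hf
  refine ⟨?_, ?_⟩
  -- A common buyer would weakly prefer `y` in the first market and `y'` in the second,
  -- although from the first to the second `y` becomes cheaper and `y'` does not.
  · rintro rfl
    have hprefer := hM.sub_le_sub _ he y' (hN.isMatching.1 hf)
    have hprefer' := hN.sub_le_sub _ hf y (hM.isMatching.1 he)
    linarith
  · rintro rfl
    exact hlt.not_ge hle

theorem image_snd_higherBids (hM : IsEquilibrium E w M p) (hN : IsEquilibrium E w N q)
    (hpos : ∀ e ∈ M, 0 < p e.2) :
    (higherBids M N p q).image Prod.snd = M.image Prod.snd ∪ N.image Prod.snd := by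
  refine Finset.Subset.antisymm ?_ fun v hv ↦ ?_
  · rw [higherBids, Finset.image_union]
    exact Finset.union_subset_union (Finset.image_subset_image (Finset.filter_subset _ _))
      (Finset.image_subset_image (Finset.filter_subset _ _))
  · obtain hlt | hle := lt_or_ge (q v) (p v)
    · obtain ⟨e, he, rfl⟩ := Finset.mem_image.1
        (hM.mem_image_snd_of_pos ((hN.nonneg v).trans_lt hlt))
      exact Finset.mem_image_of_mem _ (mem_higherBids.2 (.inl ⟨he, hlt⟩))
    · have hvN : v ∈ N.image Prod.snd := (Finset.mem_union.1 hv).elim (fun hvM ↦ by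
        obtain ⟨e, he, rfl⟩ := Finset.mem_image.1 hvM
        exact hN.mem_image_snd_of_pos ((hpos e he).trans_le hle)) id
      obtain ⟨e, he, rfl⟩ := Finset.mem_image.1 hvN
      exact Finset.mem_image_of_mem _ (mem_higherBids.2 (.inr ⟨he, hle⟩))

protected theorem higherBids (hM : IsEquilibrium E w M p) (hN : IsEquilibrium E w N q)
    (hpos : ∀ e ∈ M, 0 < p e.2) : IsEquilibrium E w (higherBids M N p q) (p ⊔ q) := by
  refine ⟨hM.isMatching_higherBids hN, fun v ↦ le_sup_of_le_left (hM.nonneg v), fun v hv ↦ ?_,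
    fun e he ↦ ?_, fun e he v hv ↦ ?_⟩
  · rw [hM.image_snd_higherBids hN hpos, Finset.mem_union, not_or] at hv
    rw [Pi.sup_apply, hM.eq_zero v hv.1, hN.eq_zero v hv.2, sup_idem]
  · rw [Pi.sup_apply]
    rcases mem_higherBids.1 he with ⟨he, hlt⟩ | ⟨he, hle⟩
    · exact (sup_eq_left.2 hlt.le).trans_le (hM.le_weight e he)
    · exact (sup_eq_right.2 hle).trans_le (hN.le_weight e he)
  · rw [Pi.sup_apply, Pi.sup_apply]
    rcases mem_higherBids.1 he with ⟨he, hlt⟩ | ⟨he, hle⟩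
    · rw [sup_eq_left.2 hlt.le]
      linarith [hM.sub_le_sub e he v hv, le_sup_left (a := p v) (b := q v)]
    · rw [sup_eq_right.2 hle]
      linarith [hN.sub_le_sub e he v hv, le_sup_right (a := p v) (b := q v)]

end IsEquilibrium

end Equilibrium

theorem DistinctWeights.eq_of_isMaxMatching {U V : Type*} {E M N : Finset (U × V)}
    {w : U × V → ℝ} {A : Finset U} (hdist : DistinctWeights E w)
    (hM : IsMaxMatching (restrictL E A) w M) (hN : IsMaxMatching (restrictL E A) w N) : M = N :=
  by_contra fun hne ↦ hdist M N hM.1.of_restrictL hN.1.of_restrictL hne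
    (hM.mWeight_eq_maxWeight.trans hN.mWeight_eq_maxWeight.symm)

theorem mm_family_antimatroid_general {U V : Type*} (E : Finset (U × V)) (w : U × V → ℝ)
    (huniq : ∀ (A : Finset U) (M N : Finset (U × V)), IsMaxMatching (restrictL E A) w M →
      IsMaxMatching (restrictL E A) w N → M = N) :
    (∅ ∈ mmFamily E w) ∧
    (∀ X ∈ mmFamily E w, X ≠ ∅ →
      ∃ v ∈ X, X.erase v ∈ mmFamily E w) ∧
    (∀ X ∈ mmFamily E w, ∀ Y ∈ mmFamily E w,
      X ∪ Y ∈ mmFamily E w) := by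
  refine ⟨?_, ?_, ?_⟩
  · simpa only [Finset.image_empty] using (IsEquilibrium.empty E w).image_snd_mem_mmFamily
  · rintro _ ⟨A, M, hM, rfl⟩ hne
    have hMne : M.Nonempty := Finset.image_nonempty.1 (Finset.nonempty_iff_ne_empty.2 hne)
    exact hM.isEquilibrium_marginalPrice.exists_erase_mem_mmFamily hMne
  · rintro _ ⟨A, M, hM, rfl⟩ _ ⟨B, N, hN, rfl⟩
    have hMp := hM.isEquilibrium_marginalPrice
    have hNq := hN.isEquilibrium_marginalPrice
    have hpos : ∀ e ∈ M, 0 < marginalPrice (restrictL E A) w e.2 := fun _ he ↦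
      marginalPrice_pos fun M' hM' ↦ huniq A M M' hM hM' ▸ Finset.mem_image_of_mem _ he
    rw [← hMp.image_snd_higherBids hNq hpos]
    exact (hMp.higherBids hNq hpos).image_snd_mem_mmFamily

/-- The set system `(V, 𝓕)` with `𝓕 = { F(U') : U' ⊆ U }` induced by a
weighted matching instance with pairwise distinct matching weights is an
antimatroid: `∅ ∈ 𝓕`, `𝓕` is accessible, and `𝓕` is union-closed. -/
theorem mm_family_antimatroid {U V : Type*} [Fintype U] [Fintype V]
    (E : Finset (U × V)) (w : U × V → ℝ)
    (hdist : DistinctWeights E w) :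
    (∅ ∈ mmFamily E w) ∧
    (∀ X ∈ mmFamily E w, X ≠ ∅ →
      ∃ v ∈ X, X.erase v ∈ mmFamily E w) ∧
    (∀ X ∈ mmFamily E w, ∀ Y ∈ mmFamily E w,
      X ∪ Y ∈ mmFamily E w) :=
  mm_family_antimatroid_general E w fun _ _ _ ↦ hdist.eq_of_isMaxMatching
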